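/- arXiv:1411.0923 — 2 statements merged into one kernel-verified Lean document; each statement's English description precedes it below -/
import Mathlib

section
/- Let n ≥ 1 and write n = 3k + r with 0 ≤ r < 3 (so k = ⌊n/3⌋). Then the optimal rubbling number of the ladder P_n□P_2 equals 1 + 2k if r = 0, and equals 2 + 2k if r = 1 or r = 2. -/
open SimpleGraph

/-- A single rubbling move on `G`: either a pebbling move (remove two pebbles at `v`,
add one at an adjacent vertex `u`) or a strict rubbling move (remove one pebble each at
distinct `v` and `w`, both adjacent to `u`, and add one pebble at `u`). -/
def RubblingStep {V : Type*} [DecidableEq V] (G : SimpleGraph V) (p q : V → ℕ) : Prop :=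
  (∃ v u, G.Adj v u ∧ 2 ≤ p v ∧
      q = fun x => if x = v then p x - 2 else if x = u then p x + 1 else p x) ∨
  (∃ v w u, v ≠ w ∧ G.Adj v u ∧ G.Adj w u ∧ 1 ≤ p v ∧ 1 ≤ p w ∧
      q = fun x => if x = v then p x - 1 else if x = w then p x - 1
          else if x = u then p x + 1 else p x)

/-- `q` is obtainable from `p` by an executable rubbling sequence. -/
def RubblingReach {V : Type*} [DecidableEq V] (G : SimpleGraph V) : (V → ℕ) → (V → ℕ) → Prop :=
  Relation.ReflTransGen (RubblingStep G)

/-- The vertex `u` is `k`-reachable from the distribution `p`. -/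
def KReachable {V : Type*} [DecidableEq V] (G : SimpleGraph V) (p : V → ℕ) (u : V) (k : ℕ) : Prop :=
  ∃ q, RubblingReach G p q ∧ k ≤ q u

/-- `p` is solvable: every vertex is reachable. -/
def Solvable {V : Type*} [DecidableEq V] (G : SimpleGraph V) (p : V → ℕ) : Prop :=
  ∀ u, KReachable G p u 1

/-- The optimal rubbling number: the minimum size of a solvable distribution. -/
noncomputable def optRub {V : Type*} [DecidableEq V] [Fintype V] (G : SimpleGraph V) : ℕ :=
  sInf {m | ∃ p : V → ℕ, Solvable G p ∧ ∑ v, p v = m}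

/-- The ladder `P_n □ P_2`. -/
def ladder (n : ℕ) : SimpleGraph (Fin n × Fin 2) :=
  pathGraph n □ pathGraph 2

/-!
Lower bound: count the pebbles of row `b` of `P_n □ P_2` twice and project everything to the path
`P_n`. Each rubbling move then becomes a sequence of rubbling moves, up to a loss of pebbles, so a
solvable distribution becomes one from which every vertex of `P_n` is `2`-reachable. On a path, the
flows of pebbles that can be pushed towards a vertex from the left and from the right, plus twice
the pebbles on it, form a potential that no rubbling move increases. It is therefore at least `4`
everywhere, and comparing the flows before and after each vertex gives more than `n` pebbles in the
projection. Adding up the two choices of `b` shows `3 |p| ≥ 2 (n + 1)`.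

Upper bound: one pebble per column, alternating between the rows and skipping every third column,
is solvable, once the column after the last one is folded onto the last one. This takes
`⌊(2n + 4) / 3⌋` pebbles.
-/

section Yields

variable {V : Type*} [DecidableEq V] {G : SimpleGraph V} {p p' q q' r : V → ℕ} {u v w : V}

lemma rubblingStep_iff : RubblingStep G p q ↔ ∃ (v w u : V) (r : V → ℕ),
    G.Adj v u ∧ G.Adj w u ∧ p = r + Pi.single v 1 + Pi.single w 1 ∧ q = r + Pi.single u 1 := by
  constructor
  · rintro (⟨v, u, hvu, hp, rfl⟩ | ⟨v, w, u, hvw, hvu, hwu, hpv, hpw, rfl⟩)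
    · refine ⟨v, v, u, p - Pi.single v 2, hvu, hvu, ?_, ?_⟩ <;> ext x <;>
        simp only [Pi.add_apply, Pi.sub_apply, Pi.single_apply] <;> grind [hvu.ne]
    · refine ⟨v, w, u, p - Pi.single v 1 - Pi.single w 1, hvu, hwu, ?_, ?_⟩ <;> ext x <;>
        simp only [Pi.add_apply, Pi.sub_apply, Pi.single_apply] <;> grind [hvu.ne, hwu.ne]
  · rintro ⟨v, w, u, r, hv, hw, rfl, rfl⟩
    obtain rfl | hvw := eq_or_ne v w
    · refine Or.inl ⟨v, u, hv, by simp, funext fun x => ?_⟩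
      simp only [Pi.add_apply, Pi.single_apply]
      grind [hv.ne]
    · refine Or.inr ⟨v, w, u, hvw, hv, hw, by simp [hvw], by simp, funext fun x => ?_⟩
      simp only [Pi.add_apply, Pi.single_apply]
      grind [hv.ne, hw.ne]

lemma RubblingStep.add_right (h : RubblingStep G p q) (s : V → ℕ) :
    RubblingStep G (p + s) (q + s) := by
  obtain ⟨v, w, u, r, hv, hw, rfl, rfl⟩ := rubblingStep_iff.1 h
  exact rubblingStep_iff.2 ⟨v, w, u, r + s, hv, hw, by abel, by abel⟩

lemma RubblingReach.add_right (h : RubblingReach G p q) (s : V → ℕ) :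
    RubblingReach G (p + s) (q + s) :=
  Relation.ReflTransGen.lift (· + s) (fun _ _ hstep => RubblingStep.add_right hstep s) _ _ h

/-- `Yields G p q`: rubbling moves from `p` can produce a distribution with at least `q v` pebbles
on every vertex `v`. Reachability is the case of a single-vertex target `q`, and unlike
`RubblingReach` this relation allows pebbles to be discarded. -/
def Yields (G : SimpleGraph V) (p q : V → ℕ) : Prop :=
  ∃ q', RubblingReach G p q' ∧ q ≤ q'

lemma kReachable_iff_yields {k : ℕ} : KReachable G p u k ↔ Yields G p (Pi.single u k) := by
  simp [KReachable, Yields, Pi.single, update_le_iff]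

namespace Yields

lemma of_le (h : q ≤ p) : Yields G p q :=
  ⟨p, Relation.ReflTransGen.refl, h⟩

lemma of_step (h : RubblingStep G p q) : Yields G p q :=
  ⟨q, Relation.ReflTransGen.single h, le_rfl⟩

lemma trans (hpq : Yields G p q) (hqr : Yields G q r) : Yields G p r := by
  obtain ⟨q', hpq', hq⟩ := hpq
  obtain ⟨r', hqr', hr⟩ := hqr
  obtain ⟨s, rfl⟩ := exists_add_of_le hq
  exact ⟨r' + s, Relation.ReflTransGen.trans hpq' (hqr'.add_right s), le_add_right hr⟩

lemma add_right (h : Yields G p q) (s : V → ℕ) : Yields G (p + s) (q + s) := by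
  obtain ⟨q', hpq', hq⟩ := h
  exact ⟨q' + s, hpq'.add_right s, add_le_add_left hq s⟩

lemma add (h : Yields G p q) (h' : Yields G p' q') : Yields G (p + p') (q + q') := by
  refine (h.add_right p').trans ?_
  rw [add_comm q, add_comm q]
  exact h'.add_right q

lemma rubble (hv : G.Adj v u) (hw : G.Adj w u) (k : ℕ) :
    Yields G (Pi.single v k + Pi.single w k) (Pi.single u k) := by
  induction k with
  | zero => exact of_le (by simp)
  | succ k ih =>
    have hstep : Yields G (Pi.single v 1 + Pi.single w 1) (Pi.single u 1) :=
      of_step (rubblingStep_iff.2 ⟨v, w, u, 0, hv, hw, by simp, by simp⟩)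
    simpa only [Pi.single_add, add_add_add_comm] using ih.add hstep

lemma rel_of_le_of_step {S : (V → ℕ) → (V → ℕ) → Prop} (h : Yields G p q)
    (hle : ∀ p q, q ≤ p → S p q) (hstep : ∀ p q, RubblingStep G p q → S p q)
    (htrans : ∀ p q r, S p q → S q r → S p r) : S p q := by
  obtain ⟨q', hreach, hq⟩ := h
  refine htrans p q' q ?_ (hle q' q hq)
  clear hq
  induction hreach with
  | refl => exact hle p p le_rfl
  | tail _ hs ih => exact htrans _ _ _ ih (hstep _ _ hs)

end Yields

namespace KReachable

lemma of_le {k : ℕ} (h : k ≤ p u) : KReachable G p u k :=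
  ⟨p, Relation.ReflTransGen.refl, h⟩

lemma mono {k : ℕ} (h : KReachable G p u k) (hpq : p ≤ q) : KReachable G q u k :=
  kReachable_iff_yields.2 ((Yields.of_le hpq).trans (kReachable_iff_yields.1 h))

lemma rubble (hv : KReachable G p v 1) (hw : KReachable G q w 1) (hvu : v = u ∨ G.Adj v u)
    (hwu : w = u ∨ G.Adj w u) : KReachable G (p + q) u 1 := by
  obtain rfl | hvu := hvu
  · exact hv.mono (le_add_right le_rfl)
  obtain rfl | hwu := hwu
  · exact hw.mono (le_add_left le_rfl)
  rw [kReachable_iff_yields] at hv hw ⊢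
  exact (hv.add hw).trans (.rubble hvu hwu 1)

end KReachable

lemma solvable_one : Solvable G 1 := fun _ => .of_le le_rfl

lemma optRub_le [Fintype V] (h : Solvable G p) : optRub G ≤ ∑ v, p v :=
  Nat.sInf_le ⟨p, h, rfl⟩

lemma le_optRub [Fintype V] {m : ℕ} (h : ∀ p, Solvable G p → m ≤ ∑ v, p v) : m ≤ optRub G := by
  refine le_csInf ⟨_, 1, solvable_one, rfl⟩ ?_
  rintro _ ⟨p, hp, rfl⟩
  exact h p hp

end Yields

section RowWeight

variable {α β : Type*} [Fintype β]

/-- The projection of a distribution on `α × β` to `α` that counts the pebbles of row `b` twice and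
all the others once. -/
def rowWeight (b : β) (p : α × β → ℕ) (i : α) : ℕ :=
  ∑ c, p (i, c) + p (i, b)

lemma rowWeight_add (b : β) (p q : α × β → ℕ) :
    rowWeight b (p + q) = rowWeight b p + rowWeight b q := by
  ext i
  simp only [rowWeight, Pi.add_apply, Finset.sum_add_distrib]
  ring

lemma rowWeight_mono (b : β) : Monotone (rowWeight (α := α) b) := fun _ _ h i =>
  add_le_add (Finset.sum_le_sum fun c _ => h (i, c)) (h (i, b))

lemma sum_rowWeight [Fintype α] (p : α × β → ℕ) :
    ∑ b, ∑ i, rowWeight b p i = (Fintype.card β + 1) * ∑ v, p v := by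
  simp only [rowWeight, Finset.sum_add_distrib, Fintype.sum_prod_type, Finset.sum_const,
    Finset.card_univ, smul_eq_mul, add_mul, one_mul]
  rw [Finset.sum_comm (s := (Finset.univ : Finset β))]

variable [DecidableEq α] [DecidableEq β] {G : SimpleGraph α} {H : SimpleGraph β}
  {p q : α × β → ℕ}

lemma rowWeight_single (b : β) (v : α × β) (k : ℕ) :
    rowWeight b (Pi.single v k) = Pi.single v.1 (if v.2 = b then 2 * k else k) := by
  obtain ⟨i, c⟩ := v
  ext j
  obtain rfl | hij := eq_or_ne j i
  · simp only [rowWeight, Pi.single_apply, Prod.mk.injEq, true_and, Finset.sum_ite_eq',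
      Finset.mem_univ, if_true]
    grind
  · simp [rowWeight, hij]

lemma yields_rowWeight_of_adj (b : β) {v w u : α × β} (hv : (G □ H).Adj v u)
    (hw : (G □ H).Adj w u) :
    Yields G (rowWeight b (Pi.single v 1 + Pi.single w 1)) (rowWeight b (Pi.single u 1)) := by
  obtain ⟨i, c⟩ := v
  obtain ⟨j, d⟩ := w
  obtain ⟨k, e⟩ := u
  simp only [rowWeight_add, rowWeight_single]
  -- One pebble moves along row `e`, the other inside the fibre over `k`: if `e = b` then the first
  -- one has weight `2`, which pays for a pebble at `k`, and otherwise the second one suffices.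
  have mixed {i : α} {c : β} (hi : G.Adj i k) (hc : c ≠ e) :
      Yields G (Pi.single i (if e = b then 2 * 1 else 1) + Pi.single k (if c = b then 2 * 1 else 1))
        (Pi.single k (if e = b then 2 * 1 else 1)) := by
    by_cases he : e = b
    · have hcb : c ≠ b := he ▸ hc
      simpa [he, hcb, ← Pi.single_add] using (Yields.rubble hi hi 1).add_right (Pi.single k 1)
    · refine .of_le (le_add_left ?_)
      simp only [he, if_false, Pi.single_le_single]
      split_ifs <;> omega
  rw [boxProd_adj] at hv hw
  rcases hv with ⟨hi, rfl : c = e⟩ | ⟨hc, rfl : i = k⟩ <;>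
    rcases hw with ⟨hj, rfl : d = _⟩ | ⟨hd, rfl : j = _⟩
  · exact .rubble hi hj _
  · exact mixed hi hd.ne
  · rw [add_comm]
    exact mixed hj hc.ne
  · rw [← Pi.single_add]
    refine .of_le (Pi.single_mono _ ?_)
    split_ifs <;> omega

lemma Yields.map_rowWeight (b : β) (h : Yields (G □ H) p q) :
    Yields G (rowWeight b p) (rowWeight b q) := by
  refine h.rel_of_le_of_step (S := fun p q => Yields G (rowWeight b p) (rowWeight b q))
    (fun p q hqp => .of_le (rowWeight_mono b hqp)) (fun p q hstep => ?_)
    (fun p q r hpq hqr => hpq.trans hqr)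
  obtain ⟨v, w, u, r, hv, hw, rfl, rfl⟩ := rubblingStep_iff.1 hstep
  rw [add_assoc, add_comm r, add_comm r, rowWeight_add, rowWeight_add _ _ r]
  exact (yields_rowWeight_of_adj b hv hw).add_right _

lemma KReachable.map_rowWeight {i : α} {b : β} {k : ℕ} (h : KReachable (G □ H) p (i, b) k) :
    KReachable G (rowWeight b p) i (2 * k) := by
  rw [kReachable_iff_yields] at h ⊢
  simpa [rowWeight_single] using h.map_rowWeight b

end RowWeight

section Path

variable {m : ℕ}

/-- The flow into `i` from the left: the number of pebbles that pebbling moves to the right can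
gather on the vertex just before `i`. Only half of them, rounded down, can be moved on to `i` by
pebbling. -/
def leftFlow (d : Fin (m + 1) → ℕ) (i : Fin (m + 1)) : ℕ :=
  Fin.induction 0 (fun j a => d j.castSucc + a / 2) i

@[simp]
lemma leftFlow_zero (d : Fin (m + 1) → ℕ) : leftFlow d 0 = 0 := rfl

@[simp]
lemma leftFlow_succ (d : Fin (m + 1) → ℕ) (j : Fin m) :
    leftFlow d j.succ = d j.castSucc + leftFlow d j.castSucc / 2 := rfl

lemma leftFlow_le_of_forall_lt {d d' : Fin (m + 1) → ℕ} {i : Fin (m + 1)}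
    (h : ∀ j < i, d' j ≤ d j) : leftFlow d' i ≤ leftFlow d i := by
  induction i using Fin.induction with
  | zero => simp
  | succ j ih =>
    have hflow := ih fun l hl => h l (hl.trans j.castSucc_lt_succ)
    have hj := h j.castSucc j.castSucc_lt_succ
    simp only [leftFlow_succ]
    omega

section Move

variable {d d' r : Fin (m + 1) → ℕ} {v w u i : Fin (m + 1)}

lemma leftFlow_move_of_le (hd : d = r + Pi.single v 1 + Pi.single w 1)
    (hd' : d' = r + Pi.single u 1) (hi : i ≤ u) : leftFlow d' i ≤ leftFlow d i := by
  refine leftFlow_le_of_forall_lt fun j hj => ?_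
  simp [hd, hd', (hj.trans_le hi).ne, add_assoc]

lemma leftFlow_move_target (hv : (pathGraph (m + 1)).Adj v u) (hw : (pathGraph (m + 1)).Adj w u)
    (hd : d = r + Pi.single v 1 + Pi.single w 1) (hd' : d' = r + Pi.single u 1) :
    leftFlow d' u + (if v < u then 1 else 0) + (if w < u then 1 else 0) ≤ leftFlow d u := by
  cases u using Fin.cases with
  | zero => simp
  | succ j =>
    have hflow := leftFlow_move_of_le hd hd' j.castSucc_lt_succ.le
    have hdj := congrFun hd j.castSucc
    have hdj' := congrFun hd' j.castSucc
    rw [pathGraph_adj] at hv hw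
    simp only [leftFlow_succ, Pi.add_apply, Pi.single_apply, Fin.ext_iff, Fin.lt_def,
      Fin.val_succ, Fin.val_castSucc] at *
    grind

lemma leftFlow_move_of_lt (hv : (pathGraph (m + 1)).Adj v u) (hw : (pathGraph (m + 1)).Adj w u)
    (hd : d = r + Pi.single v 1 + Pi.single w 1) (hd' : d' = r + Pi.single u 1) (hi : u < i) :
    2 * d' i + leftFlow d' i ≤ 2 * d i + leftFlow d i := by
  induction i using Fin.induction with
  | zero => exact absurd hi (Fin.not_lt_zero u)
  | succ j ih =>
    have hsource : d' j.succ + (if v = j.succ then 1 else 0) + (if w = j.succ then 1 else 0) =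
        d j.succ := by
      simp [hd, hd', Pi.single_apply, hi.ne', eq_comm]
    rw [leftFlow_succ, leftFlow_succ]
    obtain hu | rfl := (Fin.le_castSucc_iff.2 hi).lt_or_eq
    · specialize ih hu
      omega
    · have htarget := leftFlow_move_target hv hw hd hd'
      have hdu := congrFun hd j.castSucc
      have hdu' := congrFun hd' j.castSucc
      rw [pathGraph_adj] at hv hw
      simp only [Pi.add_apply, Pi.single_apply, Fin.ext_iff, Fin.lt_def,
        Fin.val_succ, Fin.val_castSucc] at *
      grind

end Move

/-- Twice the number of pebbles at `i` plus the flows into `i` from both sides. The pebbles at `i`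
are doubled, instead of halving the flows, because a strict rubbling move may merge one pebble from
each side. The flow from the right is obtained by reversing the path. -/
def pathPotential (d : Fin (m + 1) → ℕ) (i : Fin (m + 1)) : ℕ :=
  2 * d i + leftFlow d i + leftFlow (d ∘ Fin.rev) i.rev

lemma pathPotential_mono (i : Fin (m + 1)) : Monotone (pathPotential · i) := fun d d' h => by
  have hleft : leftFlow d i ≤ leftFlow d' i := leftFlow_le_of_forall_lt fun j _ => h j
  have hright : leftFlow (d ∘ Fin.rev) i.rev ≤ leftFlow (d' ∘ Fin.rev) i.rev :=
    leftFlow_le_of_forall_lt fun j _ => h j.rev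
  have hi : d i ≤ d' i := h i
  simp only [pathPotential]
  omega

lemma pathPotential_le_of_step {d d' : Fin (m + 1) → ℕ}
    (h : RubblingStep (pathGraph (m + 1)) d d') (i : Fin (m + 1)) :
    pathPotential d' i ≤ pathPotential d i := by
  obtain ⟨v, w, u, r, hv, hw, hd, hd'⟩ := rubblingStep_iff.1 h
  have adj_rev {x : Fin (m + 1)} (hx : (pathGraph (m + 1)).Adj x u) :
      (pathGraph (m + 1)).Adj x.rev u.rev := by
    rw [pathGraph_adj] at hx ⊢
    simp only [Fin.val_rev]
    omega
  have single_rev (x : Fin (m + 1)) : (Pi.single x 1 : Fin (m + 1) → ℕ) ∘ Fin.rev =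
      Pi.single x.rev 1 := Pi.single_comp_equiv Fin.revPerm x 1
  have hd_rev : d ∘ Fin.rev = r ∘ Fin.rev + Pi.single v.rev 1 + Pi.single w.rev 1 := by
    simp only [hd, Pi.add_comp, single_rev]
  have hd'_rev : d' ∘ Fin.rev = r ∘ Fin.rev + Pi.single u.rev 1 := by
    simp only [hd', Pi.add_comp, single_rev]
  unfold pathPotential
  obtain hlt | rfl | hgt := lt_trichotomy i u
  · have hleft := leftFlow_move_of_le hd hd' hlt.le
    have hright := leftFlow_move_of_lt (adj_rev hv) (adj_rev hw) hd_rev hd'_rev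
      (Fin.rev_lt_rev.2 hlt)
    simp only [Function.comp_apply, Fin.rev_rev] at hright
    omega
  · have hleft := leftFlow_move_target hv hw hd hd'
    have hright := leftFlow_move_target (adj_rev hv) (adj_rev hw) hd_rev hd'_rev
    have htarget : d' i = d i + 1 := by
      simp [hd, hd', hv.ne', hw.ne']
    simp only [Fin.rev_lt_rev] at hright
    grind [hv.ne, hw.ne]
  · have hleft := leftFlow_move_of_lt hv hw hd hd' hgt
    have hright := leftFlow_move_of_le hd_rev hd'_rev (Fin.rev_le_rev.2 hgt.le)
    omega

lemma four_le_pathPotential {d : Fin (m + 1) → ℕ} {i : Fin (m + 1)}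
    (h : KReachable (pathGraph (m + 1)) d i 2) : 4 ≤ pathPotential d i := by
  have hle := (kReachable_iff_yields.1 h).rel_of_le_of_step
    (S := fun p q => pathPotential q i ≤ pathPotential p i)
    (fun p q hqp => pathPotential_mono i hqp) (fun p q hstep => pathPotential_le_of_step hstep i)
    (fun p q r hpq hqr => hqr.trans hpq)
  refine le_trans ?_ hle
  simp only [pathPotential, Pi.single_eq_same]
  omega

-- Truncating the flows at `1` compensates the pebble lost when an odd flow is halved.
lemma max_flow_add_two_le {x a b : ℕ} (h : 4 ≤ 2 * x + a + b) :
    max (x + a / 2) 1 + max (x + b / 2) 1 + 2 ≤ 2 * x + max a 1 + max b 1 := by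
  omega

lemma one_add_sum_max_outflow (d : Fin (m + 1) → ℕ) :
    1 + ∑ i, max (d i + leftFlow d i / 2) 1 =
      ∑ i, max (leftFlow d i) 1 + max (d (Fin.last m) + leftFlow d (Fin.last m) / 2) 1 := by
  rw [Fin.sum_univ_castSucc, Fin.sum_univ_succ (fun i => max (leftFlow d i) 1)]
  simp [add_assoc]

lemma two_le_outflow_last {d : Fin (m + 1) → ℕ} (h : 4 ≤ pathPotential d (Fin.last m)) :
    2 ≤ d (Fin.last m) + leftFlow d (Fin.last m) / 2 := by
  simp only [pathPotential, Fin.rev_last, leftFlow_zero] at h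
  omega

lemma card_lt_sum_of_kReachable_two {d : Fin (m + 1) → ℕ}
    (h : ∀ i, KReachable (pathGraph (m + 1)) d i 2) : m + 1 < ∑ i, d i := by
  have hpot i := four_le_pathPotential (h i)
  have hpot_rev : 4 ≤ pathPotential (d ∘ Fin.rev) (Fin.last m) := by
    have hfirst := hpot 0
    simpa [pathPotential, Function.comp_def] using hfirst
  have hlast := two_le_outflow_last (hpot (Fin.last m))
  have hfirst := two_le_outflow_last hpot_rev
  have hleft := one_add_sum_max_outflow d
  have hright := one_add_sum_max_outflow (d ∘ Fin.rev)
  rw [← Equiv.sum_comp Fin.revPerm, ← Equiv.sum_comp Fin.revPerm (fun i => max (leftFlow _ i) 1)]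
    at hright
  have hsum := Finset.sum_le_sum fun (i : Fin (m + 1)) (_ : i ∈ Finset.univ) =>
    max_flow_add_two_le (hpot i)
  simp only [Finset.sum_add_distrib, ← Finset.mul_sum, Finset.sum_const, Finset.card_univ,
    Fintype.card_fin, smul_eq_mul, Fin.revPerm_apply, Function.comp_apply, Fin.rev_rev] at *
  omega

lemma card_mul_le_of_solvable_boxProd {β : Type*} [Fintype β] [DecidableEq β] {H : SimpleGraph β}
    {p : Fin (m + 1) × β → ℕ} (h : Solvable (pathGraph (m + 1) □ H) p) :
    Fintype.card β * (m + 2) ≤ (Fintype.card β + 1) * ∑ v, p v := by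
  have hrow (b : β) : m + 2 ≤ ∑ i, rowWeight b p i :=
    card_lt_sum_of_kReachable_two fun i => (h (i, b)).map_rowWeight
  calc Fintype.card β * (m + 2) = ∑ _b : β, (m + 2) := by simp
    _ ≤ ∑ b, ∑ i, rowWeight b p i := Finset.sum_le_sum fun b _ => hrow b
    _ = (Fintype.card β + 1) * ∑ v, p v := sum_rowWeight p

end Path

section Zigzag

variable {m : ℕ}

lemma ladder_clamp_eq_or_adj {i j : ℕ} (hij : i ≤ j + 1) (hji : j ≤ i + 1) (a : Fin 2) :
    (Fin.clamp i m, a) = (Fin.clamp j m, a) ∨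
      (ladder (m + 1)).Adj (Fin.clamp i m, a) (Fin.clamp j m, a) := by
  simp only [ladder, boxProd_adj, pathGraph_adj, Prod.mk.injEq, Fin.ext_iff, Fin.coe_clamp,
    and_true]
  omega

lemma ladder_rung (i : Fin (m + 1)) {a b : Fin 2} (h : a ≠ b) :
    (ladder (m + 1)).Adj (i, a) (i, b) := by
  refine boxProd_adj.2 (.inr ⟨pathGraph_adj.2 ?_, rfl⟩)
  simp only [← Fin.val_ne_iff] at *
  omega

/-- The vertex in column `j` of the zigzag that carries the pebbles of the optimal distribution: row
`1` if `j ≡ 0` and row `0` if `j ≡ 1` modulo `3`. Columns `≡ 2` stay empty and their value is junk.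
Columns beyond the last one are folded onto the last one. -/
def zigzag (m j : ℕ) : Fin (m + 1) × Fin 2 :=
  (Fin.clamp j m, if j % 3 = 0 then 1 else 0)

lemma zigzag_of_mod_three_eq_zero {j : ℕ} (hj : j % 3 = 0) : zigzag m j = (Fin.clamp j m, 1) := by
  simp [zigzag, hj]

lemma zigzag_succ_of_mod_three_eq_zero {j : ℕ} (hj : j % 3 = 0) :
    zigzag m (j + 1) = (Fin.clamp (j + 1) m, 0) := by
  simp [zigzag, show (j + 1) % 3 ≠ 0 by omega]

/-- The distribution with one pebble for each `j ∈ s`, placed on `zigzag m j`. -/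
def zigzagPebbles (m : ℕ) (s : Finset ℕ) : Fin (m + 1) × Fin 2 → ℕ :=
  ∑ j ∈ s, Pi.single (zigzag m j) 1

lemma sum_zigzagPebbles (s : Finset ℕ) : ∑ v, zigzagPebbles m s v = s.card := by
  simp only [zigzagPebbles, Finset.sum_apply]
  rw [Finset.sum_comm]
  simp

lemma zigzagPebbles_mono : Monotone (zigzagPebbles m) := fun _ _ h =>
  Finset.sum_le_sum_of_subset h

lemma kReachable_zigzag (j : ℕ) :
    KReachable (ladder (m + 1)) (zigzagPebbles m {j}) (zigzag m j) 1 :=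
  .of_le (by simp [zigzagPebbles])

lemma KReachable.rubble_zigzag {s t : Finset ℕ} {u v w : Fin (m + 1) × Fin 2}
    (hv : KReachable (ladder (m + 1)) (zigzagPebbles m s) v 1)
    (hw : KReachable (ladder (m + 1)) (zigzagPebbles m t) w 1) (hst : Disjoint s t)
    (hvu : v = u ∨ (ladder (m + 1)).Adj v u) (hwu : w = u ∨ (ladder (m + 1)).Adj w u) :
    KReachable (ladder (m + 1)) (zigzagPebbles m (s ∪ t)) u 1 := by
  rw [zigzagPebbles, Finset.sum_union hst]
  exact hv.rubble hw hvu hwu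

lemma kReachable_zigzag_pair_left {j : ℕ} (hj : j % 3 = 0) :
    KReachable (ladder (m + 1)) (zigzagPebbles m {j, j + 1}) (Fin.clamp j m, 0) 1 := by
  refine (kReachable_zigzag j).rubble_zigzag (kReachable_zigzag (j + 1)) (by simp) (.inr ?_) ?_
  · rw [zigzag_of_mod_three_eq_zero hj]
    exact ladder_rung _ (by simp)
  · rw [zigzag_succ_of_mod_three_eq_zero hj]
    exact ladder_clamp_eq_or_adj (by omega) (by omega) 0

lemma kReachable_zigzag_pair_right {j : ℕ} (hj : j % 3 = 0) :
    KReachable (ladder (m + 1)) (zigzagPebbles m {j, j + 1}) (Fin.clamp (j + 1) m, 1) 1 := by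
  refine (kReachable_zigzag j).rubble_zigzag (kReachable_zigzag (j + 1)) (by simp) ?_ (.inr ?_)
  · rw [zigzag_of_mod_three_eq_zero hj]
    exact ladder_clamp_eq_or_adj (by omega) (by omega) 1
  · rw [zigzag_succ_of_mod_three_eq_zero hj]
    exact ladder_rung _ (by simp)

lemma kReachable_zigzag_gap_one {j : ℕ} (hj : j % 3 = 0) :
    KReachable (ladder (m + 1)) (zigzagPebbles m ({j, j + 1} ∪ {j + 3}))
      (Fin.clamp (j + 2) m, 1) 1 := by
  refine (kReachable_zigzag_pair_right hj).rubble_zigzag (kReachable_zigzag (j + 3)) (by simp)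
    (ladder_clamp_eq_or_adj (by omega) (by omega) 1) ?_
  rw [zigzag_of_mod_three_eq_zero (by omega)]
  exact ladder_clamp_eq_or_adj (by omega) (by omega) 1

lemma kReachable_zigzag_gap_zero {j : ℕ} (hj : j % 3 = 0) :
    KReachable (ladder (m + 1)) (zigzagPebbles m ({j + 1} ∪ {j + 3, j + 4}))
      (Fin.clamp (j + 2) m, 0) 1 := by
  refine (kReachable_zigzag (j + 1)).rubble_zigzag
    (kReachable_zigzag_pair_left (j := j + 3) (by omega)) (by simp) ?_
    (ladder_clamp_eq_or_adj (by omega) (by omega) 0)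
  rw [zigzag_succ_of_mod_three_eq_zero hj]
  exact ladder_clamp_eq_or_adj (by omega) (by omega) 0

-- Column `j + 4` is missing here, but column `j + 3` is folded onto column `j + 2`.
lemma kReachable_zigzag_gap_zero_last {j : ℕ} (hj : j % 3 = 0) :
    KReachable (ladder (j + 3)) (zigzagPebbles (j + 2) ({j + 1} ∪ {j + 3}))
      (Fin.clamp (j + 2) (j + 2), 0) 1 := by
  refine (kReachable_zigzag (j + 1)).rubble_zigzag (kReachable_zigzag (j + 3)) (by simp) ?_
    (.inr ?_)
  · rw [zigzag_succ_of_mod_three_eq_zero hj]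
    exact ladder_clamp_eq_or_adj (by omega) (by omega) 0
  · have hfold : Fin.clamp (j + 3) (j + 2) = Fin.clamp (j + 2) (j + 2) := by simp [Fin.ext_iff]
    rw [zigzag_of_mod_three_eq_zero (by omega), hfold]
    exact ladder_rung _ (by simp)

lemma solvable_zigzagPebbles :
    Solvable (ladder (m + 1)) (zigzagPebbles m {j ∈ Finset.range (m + 2) | j % 3 ≠ 2}) := by
  have of_subset {s : Finset ℕ} {u : Fin (m + 1) × Fin 2}
      (h : KReachable (ladder (m + 1)) (zigzagPebbles m s) u 1)
      (hs : ∀ j ∈ s, j < m + 2 ∧ j % 3 ≠ 2) :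
      KReachable (ladder (m + 1)) (zigzagPebbles m {j ∈ Finset.range (m + 2) | j % 3 ≠ 2}) u 1 :=
    h.mono (zigzagPebbles_mono fun j hj => by simpa using hs j hj)
  rintro ⟨i, a⟩
  obtain ⟨l, hl, rfl⟩ : ∃ l ≤ m, Fin.clamp l m = i :=
    ⟨i, by omega, Fin.ext (by rw [Fin.coe_clamp]; omega)⟩
  obtain ⟨j, hj, rfl | rfl | rfl⟩ : ∃ j, j % 3 = 0 ∧ (j = l ∨ j + 1 = l ∨ j + 2 = l) :=
    ⟨3 * (l / 3), by omega, by omega⟩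
  all_goals obtain rfl | rfl : a = 0 ∨ a = 1 := by omega
  · exact of_subset (kReachable_zigzag_pair_left hj) (by grind)
  · rw [← zigzag_of_mod_three_eq_zero hj]
    exact of_subset (kReachable_zigzag j) (by grind)
  · rw [← zigzag_succ_of_mod_three_eq_zero hj]
    exact of_subset (kReachable_zigzag (j + 1)) (by grind)
  · exact of_subset (kReachable_zigzag_pair_right hj) (by grind)
  · obtain rfl | hm := hl.eq_or_lt
    · exact of_subset (kReachable_zigzag_gap_zero_last hj) (by grind)
    · exact of_subset (kReachable_zigzag_gap_zero hj) (by grind)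
  · exact of_subset (kReachable_zigzag_gap_one hj) (by grind)

lemma card_filter_mod_three_ne_two (n : ℕ) :
    Finset.card {j ∈ Finset.range n | j % 3 ≠ 2} = (2 * n + 2) / 3 := by
  induction n with
  | zero => simp
  | succ n ih =>
    rw [Finset.range_add_one, Finset.filter_insert]
    split_ifs
    · have hn : n % 3 = 0 ∨ n % 3 = 1 := by omega
      rw [Finset.card_insert_of_notMem (by simp), ih]
      omega
    · rw [ih]
      omega

end Zigzag

lemma optRub_ladder_succ (m : ℕ) : optRub (ladder (m + 1)) = (2 * m + 6) / 3 := by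
  apply le_antisymm
  · have hle := optRub_le (solvable_zigzagPebbles (m := m))
    rw [sum_zigzagPebbles, card_filter_mod_three_ne_two] at hle
    omega
  · refine le_optRub fun p hp => ?_
    have hcard := card_mul_le_of_solvable_boxProd hp
    rw [Fintype.card_fin] at hcard
    omega

/-- The optimal rubbling number of the ladder `P_n □ P_2`. -/
theorem optRub_ladder (n k r : ℕ) (hn : 1 ≤ n) (hdecomp : n = 3 * k + r) (hr : r < 3) :
    optRub (ladder n) = if r = 0 then 1 + 2 * k else 2 + 2 * k := by
  obtain ⟨m, rfl⟩ := Nat.exists_eq_add_of_le' hn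
  rw [optRub_ladder_succ]
  split_ifs <;> omega
end

section
/- Let n ≥ 3 and let p be a pebble distribution on the ladder P_n□P_2 such that every P_3□P_2 subgraph (three consecutive columns) contains at most 2 pebbles in total. If some P_3□P_2 subgraph contains fewer than 2 pebbles, then p is not solvable. -/
open SimpleGraph

/-!
Place the ladder in the two-way infinite one, which can only help reachability. A light block has
an empty end column, so after a reflection, a translation and an exchange of the rows we may assume
that it has columns `-1`, `0`, `1`, that column `1` and the vertex `(0, 0)` are empty, and that
`(2, 0)` carries at most one pebble. Then `(0, 0)` is unreachable.

Weighting every pebble by a power of two according to its distance from `(0, 0)` is not enough: the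
far columns together may weigh too much. So only columns `0`, `1`, `2` are weighted in this way,
while the pebbles further out are replaced by the number that the columns on their side, each read
as a single vertex, can gather next to the middle part. This count is rounded down at every column,
and since three consecutive columns hold at most two pebbles, almost nothing survives the rounding.
The resulting potential never increases and starts below `8`, the weight of one pebble at `(0, 0)`.
-/

section Rubbling

variable {V W : Type*} [DecidableEq V] [DecidableEq W] {G : SimpleGraph V} {H : SimpleGraph W}

theorem rubblingStep_iff_exists_add_single {p q : V → ℕ} :
    RubblingStep G p q ↔ ∃ (b : V → ℕ) (u v w : V), G.Adj v u ∧ G.Adj w u ∧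
      p = b + Pi.single v 1 + Pi.single w 1 ∧ q = b + Pi.single u 1 := by
  constructor
  · rintro (⟨v, u, hvu, hv, rfl⟩ | ⟨v, w, u, hvw, hvu, hwu, hv, hw, rfl⟩)
    · refine ⟨p - Pi.single v 2, u, v, v, hvu, hvu, ?_, ?_⟩ <;> funext x <;>
        simp only [Pi.add_apply, Pi.sub_apply, Pi.single_apply] <;> grind [hvu.ne]
    · refine ⟨p - Pi.single v 1 - Pi.single w 1, u, v, w, hvu, hwu, ?_, ?_⟩ <;> funext x <;>
        simp only [Pi.add_apply, Pi.sub_apply, Pi.single_apply] <;> grind [hvu.ne, hwu.ne]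
  · rintro ⟨b, u, v, w, hvu, hwu, rfl, rfl⟩
    by_cases hvw : v = w
    · subst hvw
      refine Or.inl ⟨v, u, hvu, by simp, ?_⟩
      funext x
      simp only [Pi.add_apply, Pi.single_apply]
      grind [hvu.ne]
    · refine Or.inr ⟨v, w, u, hvw, hvu, hwu, by simp [add_right_comm _ 1], by simp, ?_⟩
      funext x
      simp only [Pi.add_apply, Pi.single_apply]
      grind [hvu.ne, hwu.ne]

theorem extend_add_single {f : V → W} (hf : f.Injective) (p : V → ℕ) (v : V) :
    Function.extend f (p + Pi.single v 1) (0 : W → ℕ) =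
      Function.extend f p (0 : W → ℕ) + Pi.single (f v) 1 := by
  funext a
  by_cases ha : ∃ u, f u = a
  · obtain ⟨u, rfl⟩ := ha
    simp [hf.extend_apply, Pi.single_apply, hf.eq_iff]
  · have hne : a ≠ f v := fun h => ha ⟨v, h.symm⟩
    simp [Function.extend_apply' _ _ _ ha, hne]

theorem RubblingStep.extend (φ : G →g H) (hφ : Function.Injective φ) {p q : V → ℕ}
    (h : RubblingStep G p q) :
    RubblingStep H (Function.extend φ p (0 : W → ℕ)) (Function.extend φ q (0 : W → ℕ)) := by
  obtain ⟨b, u, v, w, hvu, hwu, rfl, rfl⟩ := rubblingStep_iff_exists_add_single.1 h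
  simp only [extend_add_single hφ]
  exact rubblingStep_iff_exists_add_single.2 ⟨_, _, _, _, φ.map_adj hvu, φ.map_adj hwu, rfl, rfl⟩

theorem KReachable.extend (φ : G →g H) (hφ : Function.Injective φ) {p : V → ℕ} {u : V} {k : ℕ}
    (h : KReachable G p u k) : KReachable H (Function.extend φ p 0) (φ u) k := by
  obtain ⟨q, hpq, hk⟩ := h
  refine ⟨Function.extend φ q 0, ?_, by rwa [hφ.extend_apply]⟩
  exact Relation.ReflTransGen.lift (Function.extend φ · (0 : W → ℕ))
    (fun _ _ => RubblingStep.extend φ hφ) _ _ hpq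

theorem KReachable.comp_iso (e : G ≃g H) {p : W → ℕ} {u : V} {k : ℕ}
    (h : KReachable H p (e u) k) : KReachable G (p ∘ e) u k := by
  have hext : Function.extend e.symm p (0 : V → ℕ) = p ∘ e := by
    funext v
    simpa using e.symm.injective.extend_apply p 0 (e v)
  simpa [hext] using h.extend e.symm.toHom e.symm.injective

end Rubbling

section Inflow

/-- The number of pebbles that the `N` columns `c - N + 1, …, c` can gather in column `c`, when
column `j` holds `f j` pebbles and a step to the next column halves and rounds down. -/
def inflow (f : ℤ → ℕ) : ℕ → ℤ → ℕ
  | 0, _ => 0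
  | N + 1, c => f c + inflow f N (c - 1) / 2

variable {f : ℤ → ℕ} {N : ℕ} {c j : ℤ}

theorem inflow_mono {g : ℤ → ℕ} (h : f ≤ g) (N : ℕ) (c : ℤ) : inflow f N c ≤ inflow g N c := by
  induction N generalizing c with
  | zero => exact le_rfl
  | succ N ih => exact add_le_add (h c) (Nat.div_le_div_right (ih _))

theorem inflow_le_inflow_add_single (f : ℤ → ℕ) (N : ℕ) (c j : ℤ) :
    inflow f N c ≤ inflow (f + Pi.single j 1) N c :=
  inflow_mono le_self_add N c

theorem inflow_add_single_of_lt (h : c < j) :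
    inflow (f + Pi.single j 1) N c = inflow f N c := by
  induction N generalizing c with
  | zero => rfl
  | succ N ih => simp [inflow, ih (show c - 1 < j by omega), h.ne]

theorem inflow_add_single_self (hN : 0 < N) (f : ℤ → ℕ) (c : ℤ) :
    inflow (f + Pi.single c 1) N c = inflow f N c + 1 := by
  obtain ⟨N, rfl⟩ := Nat.exists_eq_add_one.2 hN
  simp [inflow, inflow_add_single_of_lt (sub_one_lt c), add_right_comm]

theorem inflow_add_single_le (f : ℤ → ℕ) (N : ℕ) (c j : ℤ) :
    inflow (f + Pi.single j 1) N c ≤ inflow f N c + 1 := by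
  induction N generalizing c with
  | zero => simp [inflow]
  | succ N ih =>
    obtain rfl | hcj := eq_or_ne c j
    · exact (inflow_add_single_self N.succ_pos f c).le
    · have := ih (c - 1)
      simp only [inflow, Pi.add_apply, Pi.single_eq_of_ne hcj]
      omega

theorem inflow_add_single_le_add_single_add_single {k l : ℤ} (hk : c < k + N) (hl : c < l + N)
    (hkc : k ≤ c) (hlc : l ≤ c) (hjk : j ≤ k + 1) (hjl : j ≤ l + 1) :
    inflow (f + Pi.single j 1) N c ≤ inflow (f + Pi.single k 1 + Pi.single l 1) N c := by
  induction N generalizing c with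
  | zero => omega
  | succ N ih =>
    have htop : inflow (f + Pi.single j 1) (N + 1) c ≤ inflow (f + Pi.single c 1) (N + 1) c :=
      (inflow_add_single_le f _ c j).trans_eq (inflow_add_single_self N.succ_pos f c).symm
    obtain rfl | hkc := hkc.eq_or_lt
    · exact htop.trans (inflow_le_inflow_add_single ..)
    obtain rfl | hlc := hlc.eq_or_lt
    · rw [add_right_comm]
      exact htop.trans (inflow_le_inflow_add_single ..)
    obtain hjc | rfl : j < c ∨ j = c := by omega
    · have := ih (c := c - 1) (by omega) (by omega) (by omega) (by omega)
      simp only [inflow, Pi.add_apply, Pi.single_eq_of_ne hjc.ne', Pi.single_eq_of_ne hkc.ne',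
        Pi.single_eq_of_ne hlc.ne']
      omega
    · obtain rfl : k = j - 1 := by omega
      obtain rfl : l = j - 1 := by omega
      have hN : 0 < N := by omega
      simp only [inflow, Pi.add_apply, Pi.single_eq_same, Pi.single_eq_of_ne hkc.ne',
        inflow_add_single_of_lt hkc, inflow_add_single_self hN]
      omega

theorem inflow_le (hf : ∀ c, f c + f (c + 1) + f (c + 2) ≤ 2) (N : ℕ) (c : ℤ) :
    inflow f N c ≤ f c + f (c - 1) / 2 := by
  induction N generalizing c with
  | zero => exact Nat.zero_le _
  | succ N ih =>
    have hprev := ih (c - 1)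
    have hblock := hf (c - 2)
    rw [show c - 2 + 1 = c - 1 by ring, sub_add_cancel] at hblock
    rw [show c - 1 - 1 = c - 2 by ring] at hprev
    simp only [inflow]
    omega

end Inflow

section InfiniteLadder

/-- The two-way infinite ladder `P_∞ □ P_2`, with columns indexed by `ℤ`. -/
noncomputable def infiniteLadder : SimpleGraph (ℤ × Fin 2) :=
  hasse ℤ □ pathGraph 2

theorem infiniteLadder_adj {a b : ℤ × Fin 2} :
    infiniteLadder.Adj a b ↔
      ((a.1 + 1 = b.1 ∨ b.1 + 1 = a.1) ∧ a.2 = b.2) ∨ (a.1 = b.1 ∧ a.2 ≠ b.2) := by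
  simp only [infiniteLadder, boxProd_adj, hasse_adj, Order.covBy_iff_add_one_eq,
    pathGraph_two_eq_top, top_adj]
  tauto

/-- The automorphism of the infinite ladder that reflects the columns if `ε = -1`, then moves
column `0` to column `d`, and exchanges the rows if `s = 1`. -/
noncomputable def infiniteLadderAut (ε : ℤˣ) (d : ℤ) (s : Fin 2) :
    infiniteLadder ≃g infiniteLadder where
  toEquiv := ((Units.mulLeft ε).trans (Equiv.addRight d)).prodCongr (Equiv.addRight s)
  map_rel_iff' := by
    intro a b
    simp only [infiniteLadder_adj, Equiv.prodCongr_apply, Prod.map, Equiv.trans_apply,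
      Units.mulLeft_apply, Equiv.coe_addRight, add_left_inj, ne_eq]
    rcases Int.units_eq_one_or ε with rfl | rfl <;>
      simp only [Units.val_one, Units.val_neg, one_mul, neg_mul, neg_inj] <;> omega

/-- The inclusion of the finite ladder: the columns `0, …, n - 1` of the infinite one. -/
noncomputable def ladderHom (n : ℕ) : ladder n →g infiniteLadder where
  toFun v := (v.1, v.2)
  map_rel' := by
    intro v w h
    simp only [ladder, boxProd_adj, pathGraph_adj (n := n)] at h
    simp only [infiniteLadder, boxProd_adj, hasse_adj, Order.covBy_iff_add_one_eq]
    grind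

theorem ladderHom_injective (n : ℕ) : Function.Injective (ladderHom n) := by
  intro v w h
  simpa [ladderHom, Prod.ext_iff, Fin.ext_iff] using h

/-- The total number of pebbles in column `c`. -/
def columnSum (F : ℤ × Fin 2 → ℕ) (c : ℤ) : ℕ :=
  F (c, 0) + F (c, 1)

theorem exists_row_eq_zero_and_le_one {F : ℤ × Fin 2 → ℕ} {c d : ℤ} (hd : columnSum F d ≤ 1)
    (hdc : columnSum F d + columnSum F c ≤ 2) : ∃ r, F (d, r) = 0 ∧ F (c, r) ≤ 1 := by
  simp only [columnSum] at hd hdc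
  simp only [Fin.exists_fin_two]
  omega

theorem columnSum_add_single (F : ℤ × Fin 2 → ℕ) (a : ℤ × Fin 2) :
    columnSum (F + Pi.single a 1) = columnSum F + Pi.single a.1 1 := by
  obtain ⟨j, r⟩ := a
  funext c
  fin_cases r <;> simp [columnSum, Pi.single_apply] <;> omega

theorem add_single_comp_neg (f : ℤ → ℕ) (j : ℤ) :
    (f + Pi.single j 1) ∘ Neg.neg = f ∘ Neg.neg + Pi.single (-j) 1 := by
  funext c
  simp [Pi.single_apply, neg_eq_iff_eq_neg]

/-- The pebbles in columns `0`, `1`, `2`, each weighted by `8 / 2 ^ d`, where `d` is its distance to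
the target vertex `(0, 0)`: the linear part of `potential`. -/
def nearPotential (F : ℤ × Fin 2 → ℕ) : ℕ :=
  8 * F (0, 0) + 4 * F (0, 1) + 4 * F (1, 0) + 2 * F (1, 1) + 2 * F (2, 0) + F (2, 1)

theorem nearPotential_add (F F' : ℤ × Fin 2 → ℕ) :
    nearPotential (F + F') = nearPotential F + nearPotential F' := by
  simp only [nearPotential, Pi.add_apply]
  ring

/-- The quantity that rubbling moves do not increase. The pebbles left of column `0` count only
through the number that can be gathered in column `-1`, at weight `4`; those right of column `2`
through the number that can be gathered in column `3`, at weight `1`, where negating the columns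
turns a flow to the left into a flow to the right. Only the `N` nearest columns on each side are
taken into account. -/
def potential (N : ℕ) (F : ℤ × Fin 2 → ℕ) : ℕ :=
  nearPotential F + 4 * inflow (columnSum F) N (-1) + inflow (columnSum F ∘ Neg.neg) N (-3)

/-- The increase of `potential` caused by a pebble added at `a`, if `a` lies in the columns
`-1, …, 3`. Further out it is `0`, which is only a lower bound because of the rounding in
`inflow`. -/
def pebbleValue (a : ℤ × Fin 2) : ℕ :=
  nearPotential (Pi.single a 1) + (if a.1 = -1 then 4 else 0) + if a.1 = 3 then 1 else 0

theorem nearPotential_single_eq_zero {a : ℤ × Fin 2} (ha : a.1 < 0 ∨ 2 < a.1) :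
    nearPotential (Pi.single a 1) = 0 := by
  obtain ⟨c, r⟩ := a
  simp only [nearPotential, Pi.single_apply, Prod.ext_iff]
  grind

variable {F : ℤ × Fin 2 → ℕ} {N : ℕ} {a u v w : ℤ × Fin 2}

theorem potential_add_single (N : ℕ) (F : ℤ × Fin 2 → ℕ) (a : ℤ × Fin 2) :
    potential N (F + Pi.single a 1) = nearPotential F + nearPotential (Pi.single a 1) +
      4 * inflow (columnSum F + Pi.single a.1 1) N (-1) +
      inflow (columnSum F ∘ Neg.neg + Pi.single (-a.1) 1) N (-3) := by
  rw [potential, nearPotential_add, columnSum_add_single, add_single_comp_neg]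

theorem potential_add_pebbleValue_le (ha : a.1.natAbs ≤ N) :
    potential N F + pebbleValue a ≤ potential N (F + Pi.single a 1) := by
  rw [potential_add_single, potential, pebbleValue]
  have hl := inflow_le_inflow_add_single (columnSum F) N (-1) a.1
  have hr := inflow_le_inflow_add_single (columnSum F ∘ Neg.neg) N (-3) (-a.1)
  have hl_end : a.1 = -1 → inflow (columnSum F + Pi.single a.1 1) N (-1) =
      inflow (columnSum F) N (-1) + 1 := fun h => h ▸ inflow_add_single_self (by omega) _ _
  have hr_end : a.1 = 3 → inflow (columnSum F ∘ Neg.neg + Pi.single (-a.1) 1) N (-3) =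
      inflow (columnSum F ∘ Neg.neg) N (-3) + 1 := fun h =>
    h ▸ inflow_add_single_self (by omega) _ _
  split_ifs <;> omega

theorem potential_add_single_le (hl : -1 ≤ a.1) (hr : a.1 ≤ 3) :
    potential N (F + Pi.single a 1) ≤ potential N F + pebbleValue a := by
  rw [potential_add_single, potential, pebbleValue]
  have hl_le := inflow_add_single_le (columnSum F) N (-1) a.1
  have hr_le := inflow_add_single_le (columnSum F ∘ Neg.neg) N (-3) (-a.1)
  have hl_lt : -1 < a.1 → _ := inflow_add_single_of_lt (f := columnSum F) (N := N)
  have hr_lt : -3 < -a.1 → _ := inflow_add_single_of_lt (f := columnSum F ∘ Neg.neg) (N := N)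
  split_ifs <;> omega

theorem pebbleValue_le_two_mul (h : infiniteLadder.Adj v u) (hl : -1 ≤ v.1) (hr : v.1 ≤ 3) :
    pebbleValue u ≤ 2 * pebbleValue v := by
  obtain ⟨c, r⟩ := u
  obtain ⟨d, s⟩ := v
  simp only [infiniteLadder_adj] at *
  simp only [pebbleValue, nearPotential, Pi.single_apply, Prod.ext_iff]
  grind (splits := 30)

theorem pebbleValue_le_of_outward (h : infiniteLadder.Adj v u)
    (hu : u.1 = -1 ∧ 0 ≤ v.1 ∨ u.1 = 3 ∧ v.1 ≤ 2) : pebbleValue u ≤ pebbleValue v := by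
  obtain ⟨c, r⟩ := u
  obtain ⟨d, s⟩ := v
  simp only [infiniteLadder_adj] at *
  simp only [pebbleValue, nearPotential, Pi.single_apply, Prod.ext_iff]
  grind (splits := 30)

theorem pebbleValue_le_add (hv : infiniteLadder.Adj v u) (hw : infiniteLadder.Adj w u)
    (hl : ¬(u.1 ≤ -1 ∧ v.1 ≤ -1 ∧ w.1 ≤ -1)) (hr : ¬(3 ≤ u.1 ∧ 3 ≤ v.1 ∧ 3 ≤ w.1)) :
    pebbleValue u ≤ pebbleValue v + pebbleValue w := by
  have hv_cases := infiniteLadder_adj.1 hv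
  have hw_cases := infiniteLadder_adj.1 hw
  by_cases hvn : -1 ≤ v.1 ∧ v.1 ≤ 3
  · by_cases hwn : -1 ≤ w.1 ∧ w.1 ≤ 3
    · have := pebbleValue_le_two_mul hv hvn.1 hvn.2
      have := pebbleValue_le_two_mul hw hwn.1 hwn.2
      omega
    · exact le_add_right (pebbleValue_le_of_outward hv (by omega))
  · exact le_add_left (pebbleValue_le_of_outward hw (by omega))

theorem potential_step_le_of_left (hvu : u.1 ≤ v.1 + 1) (hwu : u.1 ≤ w.1 + 1)
    (hvN : v.1.natAbs ≤ N) (hwN : w.1.natAbs ≤ N) (hu : u.1 ≤ -1) (hv : v.1 ≤ -1)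
    (hw : w.1 ≤ -1) :
    potential N (F + Pi.single u 1) ≤ potential N (F + Pi.single v 1 + Pi.single w 1) := by
  have hnear : nearPotential (Pi.single u 1) = 0 := nearPotential_single_eq_zero (by omega)
  have hleft := inflow_add_single_le_add_single_add_single (f := columnSum F) (N := N)
    (c := -1) (k := v.1) (l := w.1) (by omega) (by omega) hv hw hvu hwu
  have hright := inflow_add_single_of_lt (f := columnSum F ∘ Neg.neg) (N := N)
    (c := -3) (j := -u.1) (by omega)
  have hright_v := inflow_le_inflow_add_single (columnSum F ∘ Neg.neg) N (-3) (-v.1)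
  have hright_w := inflow_le_inflow_add_single
    (columnSum F ∘ Neg.neg + Pi.single (-v.1) 1) N (-3) (-w.1)
  rw [potential_add_single, potential_add_single, nearPotential_add, columnSum_add_single,
    add_single_comp_neg]
  omega

theorem potential_step_le_of_right (huv : v.1 ≤ u.1 + 1) (huw : w.1 ≤ u.1 + 1)
    (hvN : v.1.natAbs ≤ N) (hwN : w.1.natAbs ≤ N) (hu : 3 ≤ u.1) (hv : 3 ≤ v.1) (hw : 3 ≤ w.1) :
    potential N (F + Pi.single u 1) ≤ potential N (F + Pi.single v 1 + Pi.single w 1) := by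
  have hnear : nearPotential (Pi.single u 1) = 0 := nearPotential_single_eq_zero (by omega)
  have hright := inflow_add_single_le_add_single_add_single (f := columnSum F ∘ Neg.neg) (N := N)
    (c := -3) (j := -u.1) (k := -v.1) (l := -w.1) (by omega) (by omega) (by omega) (by omega)
    (by omega) (by omega)
  have hleft := inflow_add_single_of_lt (f := columnSum F) (N := N) (c := -1) (j := u.1) (by omega)
  have hleft_v := inflow_le_inflow_add_single (columnSum F) N (-1) v.1
  have hleft_w := inflow_le_inflow_add_single (columnSum F + Pi.single v.1 1) N (-1) w.1
  rw [potential_add_single, potential_add_single, nearPotential_add, columnSum_add_single,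
    add_single_comp_neg]
  omega

theorem potential_step_le (hv : infiniteLadder.Adj v u) (hw : infiniteLadder.Adj w u)
    (hvN : v.1.natAbs ≤ N) (hwN : w.1.natAbs ≤ N) :
    potential N (F + Pi.single u 1) ≤ potential N (F + Pi.single v 1 + Pi.single w 1) := by
  have hv_cases := infiniteLadder_adj.1 hv
  have hw_cases := infiniteLadder_adj.1 hw
  by_cases hl : u.1 ≤ -1 ∧ v.1 ≤ -1 ∧ w.1 ≤ -1
  · exact potential_step_le_of_left (by omega) (by omega) hvN hwN hl.1 hl.2.1 hl.2.2
  by_cases hr : 3 ≤ u.1 ∧ 3 ≤ v.1 ∧ 3 ≤ w.1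
  · exact potential_step_le_of_right (by omega) (by omega) hvN hwN hr.1 hr.2.1 hr.2.2
  calc
    potential N (F + Pi.single u 1) ≤ potential N F + pebbleValue u :=
      potential_add_single_le (by omega) (by omega)
    _ ≤ potential N F + pebbleValue v + pebbleValue w := by
      rw [add_assoc]
      gcongr
      exact pebbleValue_le_add hv hw hl hr
    _ ≤ potential N (F + Pi.single v 1) + pebbleValue w := by
      gcongr
      exact potential_add_pebbleValue_le hvN
    _ ≤ potential N (F + Pi.single v 1 + Pi.single w 1) := potential_add_pebbleValue_le hwN

/-- A move is controlled only when `N` covers its columns, so `N` has to grow with the sequence. -/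
theorem eventually_potential_le {F F' : ℤ × Fin 2 → ℕ} (h : RubblingReach infiniteLadder F F') :
    ∀ᶠ N in Filter.atTop, potential N F' ≤ potential N F := by
  induction h with
  | refl => exact .of_forall fun _ => le_rfl
  | tail _ hstep ih =>
    obtain ⟨b, u, v, w, hvu, hwu, rfl, rfl⟩ := rubblingStep_iff_exists_add_single.1 hstep
    filter_upwards [ih, Filter.eventually_ge_atTop v.1.natAbs,
      Filter.eventually_ge_atTop w.1.natAbs] with N hN hvN hwN
    exact (potential_step_le hvu hwu hvN hwN).trans hN

/-- The total number of pebbles in the `P_3 □ P_2` subgraph with columns `c`, `c + 1`, `c + 2`. -/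
def blockSum (F : ℤ × Fin 2 → ℕ) (c : ℤ) : ℕ :=
  columnSum F c + columnSum F (c + 1) + columnSum F (c + 2)

theorem potential_lt_eight (hF : ∀ c, blockSum F c ≤ 2)
    (hleft : columnSum F (-1) + columnSum F 0 ≤ 1) (hright : columnSum F 1 = 0)
    (htarget : F (0, 0) = 0) (hrow : F (2, 0) ≤ 1) (N : ℕ) : potential N F < 8 := by
  have hinflow_left := inflow_le hF N (-1)
  have hinflow_right := inflow_le (f := columnSum F ∘ Neg.neg) (c := -3) (N := N) fun c => by
    have hblock := hF (-(c + 2))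
    rw [blockSum, show -(c + 2) + 1 = -(c + 1) by ring, show -(c + 2) + 2 = -c by ring] at hblock
    simp only [Function.comp_apply]
    omega
  have hblock_left := hF (-2)
  have hblock_right := hF 2
  simp only [blockSum, Function.comp_apply, Int.reduceNeg, Int.reduceAdd, Int.reduceSub, neg_neg]
    at hblock_left hblock_right hinflow_left hinflow_right
  have hleft_le : inflow (columnSum F) N (-1) + F (0, 1) ≤ 1 := by
    simp only [columnSum] at *
    omega
  have hright_le : F (2, 0) + F (2, 1) + inflow (columnSum F ∘ Neg.neg) N (-3) ≤ 2 := by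
    simp only [columnSum] at *
    omega
  simp only [columnSum] at hright
  simp only [potential, nearPotential]
  omega

theorem not_kReachable_zero (hF : ∀ c, blockSum F c ≤ 2)
    (hleft : columnSum F (-1) + columnSum F 0 ≤ 1) (hright : columnSum F 1 = 0)
    (htarget : F (0, 0) = 0) (hrow : F (2, 0) ≤ 1) : ¬ KReachable infiniteLadder F (0, 0) 1 := by
  rintro ⟨F', hreach, hpos⟩
  obtain ⟨N, hN⟩ := (eventually_potential_le hreach).exists
  have hlt := potential_lt_eight hF hleft hright htarget hrow N
  have hge : 8 * F' (0, 0) ≤ potential N F' := by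
    simp only [potential, nearPotential]
    omega
  omega

theorem infiniteLadderAut_apply (ε : ℤˣ) (d c : ℤ) (s r : Fin 2) :
    infiniteLadderAut ε d s (c, r) = (ε * c + d, r + s) :=
  rfl

theorem columnSum_comp_infiniteLadderAut (F : ℤ × Fin 2 → ℕ) (ε : ℤˣ) (d : ℤ) (s : Fin 2) (c : ℤ) :
    columnSum (F ∘ infiniteLadderAut ε d s) c = columnSum F (ε * c + d) := by
  fin_cases s <;> simp [columnSum, infiniteLadderAut_apply, add_comm]

theorem blockSum_comp_infiniteLadderAut_le (hF : ∀ c, blockSum F c ≤ 2) (ε : ℤˣ) (d : ℤ)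
    (s : Fin 2) (c : ℤ) : blockSum (F ∘ infiniteLadderAut ε d s) c ≤ 2 := by
  simp only [blockSum, columnSum_comp_infiniteLadderAut]
  rcases Int.units_eq_one_or ε with rfl | rfl
  · have hblock := hF (c + d)
    rw [blockSum, add_right_comm c d 1, add_right_comm c d 2] at hblock
    simpa only [Units.val_one, one_mul] using hblock
  · have hblock := hF (-(c + 2) + d)
    rw [blockSum, show -(c + 2) + d + 1 = -(c + 1) + d by ring,
      show -(c + 2) + d + 2 = -c + d by ring] at hblock
    simp only [Units.val_neg, Units.val_one, neg_one_mul]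
    omega

theorem exists_not_kReachable_of_columnSum_eq_zero (hF : ∀ c, blockSum F c ≤ 2) (ε : ℤˣ) {d : ℤ}
    (hbehind : columnSum F (d - ε) + columnSum F d ≤ 1) (hahead : columnSum F (d + ε) = 0) :
    ∃ r, ¬ KReachable infiniteLadder F (d, r) 1 := by
  have hblock := blockSum_comp_infiniteLadderAut_le hF ε d 0 0
  simp only [blockSum, columnSum_comp_infiniteLadderAut] at hblock
  obtain ⟨r, htarget, hrow⟩ := exists_row_eq_zero_and_le_one (F := F) (c := ε * 2 + d) (d := d)
    (by omega) (by simpa [add_comm _ d, hahead] using hblock)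
  refine ⟨r, fun h => not_kReachable_zero (F := F ∘ infiniteLadderAut ε d r)
    (blockSum_comp_infiniteLadderAut_le hF ε d r) ?_ ?_ ?_ ?_ (KReachable.comp_iso _ ?_)⟩
  · simpa [columnSum_comp_infiniteLadderAut, sub_eq_neg_add] using hbehind
  · simpa [columnSum_comp_infiniteLadderAut, add_comm] using hahead
  · simpa [infiniteLadderAut_apply] using htarget
  · simpa [infiniteLadderAut_apply] using hrow
  · simpa [infiniteLadderAut_apply] using h

theorem exists_not_kReachable_of_blockSum_lt (hF : ∀ c, blockSum F c ≤ 2) {c : ℤ}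
    (hc : blockSum F c < 2) : ∃ r, ¬ KReachable infiniteLadder F (c + 1, r) 1 := by
  have hend : columnSum F (c + 2) = 0 ∨ columnSum F c = 0 := by
    simp only [blockSum] at hc
    omega
  rw [blockSum] at hc
  rcases hend with hend | hend
  · apply exists_not_kReachable_of_columnSum_eq_zero hF 1 <;>
      simp only [Units.val_one, add_sub_cancel_right, add_assoc c 1, one_add_one_eq_two] <;> omega
  · apply exists_not_kReachable_of_columnSum_eq_zero hF (-1) <;>
      simp only [Units.val_neg, Units.val_one, sub_neg_eq_add, add_neg_cancel_right,
        add_assoc c 1 1, one_add_one_eq_two] <;> omega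

end InfiniteLadder

section Extension

theorem extend_zero_eq_sum {V W : Type*} [Fintype V] [DecidableEq W] {f : V → W}
    (hf : f.Injective) (p : V → ℕ) (a : W) :
    Function.extend f p 0 a = ∑ v, if f v = a then p v else 0 := by
  by_cases ha : ∃ v, f v = a
  · obtain ⟨u, rfl⟩ := ha
    rw [hf.extend_apply, Fintype.sum_eq_single u fun v hv => if_neg (hf.ne hv), if_pos rfl]
  · rw [Function.extend_apply' _ _ _ ha]
    exact (Finset.sum_eq_zero fun v _ => if_neg fun h => ha ⟨v, h⟩).symm

variable {n : ℕ} (p : Fin n × Fin 2 → ℕ)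

theorem columnSum_extend_ladderHom (c : ℤ) :
    columnSum (Function.extend (ladderHom n) p 0) c =
      ∑ v : Fin n × Fin 2, if (v.1 : ℤ) = c then p v else 0 := by
  simp only [columnSum, extend_zero_eq_sum (ladderHom_injective n), ← Finset.sum_add_distrib]
  refine Finset.sum_congr rfl fun ⟨j, r⟩ _ => ?_
  fin_cases r <;> simp [ladderHom]

theorem blockSum_extend_ladderHom (c : ℤ) :
    blockSum (Function.extend (ladderHom n) p 0) c =
      ∑ v : Fin n × Fin 2, if c ≤ (v.1 : ℤ) ∧ (v.1 : ℤ) < c + 3 then p v else 0 := by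
  simp only [blockSum, columnSum_extend_ladderHom, ← Finset.sum_add_distrib]
  refine Finset.sum_congr rfl fun v _ => ?_
  split_ifs <;> omega

theorem blockSum_extend_ladderHom_natCast (i : ℕ) :
    blockSum (Function.extend (ladderHom n) p 0) i =
      ∑ v : Fin n × Fin 2, if i ≤ (v.1 : ℕ) ∧ (v.1 : ℕ) < i + 3 then p v else 0 := by
  rw [blockSum_extend_ladderHom]
  norm_cast

theorem exists_blockSum_extend_ladderHom_le (hn : 3 ≤ n) (c : ℤ) : ∃ i : ℕ, i + 3 ≤ n ∧
    blockSum (Function.extend (ladderHom n) p 0) c ≤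
      ∑ v : Fin n × Fin 2, if i ≤ (v.1 : ℕ) ∧ (v.1 : ℕ) < i + 3 then p v else 0 := by
  refine ⟨min c.toNat (n - 3), by omega, ?_⟩
  rw [blockSum_extend_ladderHom]
  refine Finset.sum_le_sum fun v _ => ?_
  split_ifs <;> omega

end Extension

/-- If every three consecutive columns of the ladder carry at most 2 pebbles and some
three consecutive columns carry fewer than 2 pebbles, then `p` is not solvable. -/
theorem not_solvable_of_light_block (n : ℕ) (hn : 3 ≤ n) (p : Fin n × Fin 2 → ℕ)
    (hsmall : ∀ i : ℕ, i + 3 ≤ n →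
      (∑ v : Fin n × Fin 2, if i ≤ (v.1 : ℕ) ∧ (v.1 : ℕ) < i + 3 then p v else 0) ≤ 2)
    (hlight : ∃ i : ℕ, i + 3 ≤ n ∧
      (∑ v : Fin n × Fin 2, if i ≤ (v.1 : ℕ) ∧ (v.1 : ℕ) < i + 3 then p v else 0) < 2) :
    ¬ Solvable (ladder n) p := by
  obtain ⟨i, hi, hlt⟩ := hlight
  have hblock (c : ℤ) : blockSum (Function.extend (ladderHom n) p 0) c ≤ 2 := by
    obtain ⟨j, hj, hle⟩ := exists_blockSum_extend_ladderHom_le p hn c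
    exact hle.trans (hsmall j hj)
  obtain ⟨r, hr⟩ := exists_not_kReachable_of_blockSum_lt hblock
    ((blockSum_extend_ladderHom_natCast p i).trans_lt hlt)
  intro hsolvable
  exact hr ((hsolvable (⟨i + 1, by omega⟩, r)).extend (ladderHom n) (ladderHom_injective n))
end
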